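/- Let n ≥ 1 and B ≥ 0 be integers, let γ_0, γ_1, …, γ_B be a partition of {1,…,n} with |γ_b| = k_b ≥ 1 for each b, and let 0 < σ²_min < σ²_max. For c ∈ ℝⁿ such that each maximum likelihood estimate σ̂_b² = S_{γ_b}(c)/k_b lies in [σ²_min, σ²_max] and is positive, the normalized maximum likelihood density for the subband model — the maximized likelihood Π_{b=0}^{B} Π_{i∈γ_b} φ(c_i; 0, σ̂_b²) divided by its integral over the region {c′ ∈ ℝⁿ : σ²_min ≤ S_{γ_b}(c′)/k_b ≤ σ²_max for all b} — has code length −ln f_nml(c) = Σ_{b=0}^{B} [ (k_b/2) ln S_{γ_b}(c) − ln Γ(k_b/2) ] + (n/2) ln π + (B+1) ln ln(σ²_max/σ²_min). -/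

import Mathlib

open MeasureTheory Real Finset

/-- `Sg γ c = ∑_{i ∈ γ} c_i²`. -/
noncomputable def Sg {n : ℕ} (γ : Finset (Fin n)) (c : Fin n → ℝ) : ℝ :=
  ∑ i ∈ γ, (c i) ^ 2

/-- Centered Gaussian density `φ(x; 0, σ²) = (2πσ²)^{-1/2} exp(-x²/(2σ²))`. -/
noncomputable def gauss (x σ2 : ℝ) : ℝ :=
  (2 * Real.pi * σ2) ^ (-(1 : ℝ) / 2) * Real.exp (-(x ^ 2) / (2 * σ2))

/-- The maximized likelihood of `c` under the subband model with subbands `γ b`. -/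
noncomputable def maxLikSub {n B : ℕ} (γ : Fin (B + 1) → Finset (Fin n))
    (c : Fin n → ℝ) : ℝ :=
  ∏ b : Fin (B + 1), ∏ i ∈ γ b, gauss (c i) (Sg (γ b) c / (γ b).card)

/-!
The subbands occupy disjoint sets of coordinates, so the normalizing integral factors over them. On
a single subband of dimension `k`, the maximized likelihood depends on the sample only through its
mean square `v`, being `(2πe v)^(-k/2)`. In polar coordinates, Lebesgue measure pushed forward by
the mean square has density `(πk)^(k/2) / Γ(k/2) · v^(k/2 - 1)`. The two powers of `v` combine to
`v⁻¹`, whose integral over `[σ²_min, σ²_max]` is `ln (σ²_max / σ²_min)`.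
-/

section Partition

variable {β ι : Type*} [Fintype β]

lemma measurePreserving_piCurry {κ : β → Type*} [∀ b, Fintype (κ b)] {X : ∀ b, κ b → Type*}
    [∀ b i, MeasurableSpace (X b i)] (μ : ∀ b i, Measure (X b i)) [∀ b i, SigmaFinite (μ b i)] :
    MeasurePreserving (MeasurableEquiv.piCurry X)
      (Measure.pi fun p : Σ b, κ b ↦ μ p.1 p.2) (Measure.pi fun b ↦ Measure.pi (μ b)) := by
  refine MeasurePreserving.symm (MeasurableEquiv.piCurry X).symm ⟨MeasurableEquiv.measurable _, ?_⟩
  refine (Measure.pi_eq fun s _ ↦ ?_).symm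
  have preimage_box : (MeasurableEquiv.piCurry X).symm ⁻¹' Set.univ.pi s =
      Set.univ.pi fun b ↦ Set.univ.pi fun i ↦ s ⟨b, i⟩ := by
    ext x
    simp only [Set.mem_preimage, Set.mem_univ_pi, Sigma.forall]
    rfl
  simp only [MeasurableEquiv.map_apply, preimage_box, Measure.pi_pi, Fintype.prod_sigma]

variable [Fintype ι] {γ : β → Finset ι}

lemma setIntegral_prod_restrict {𝕜 : Type*} [RCLike 𝕜] (hγ : ∀ i, ∃! b, i ∈ γ b)
    {X : ι → Type*} [∀ i, MeasurableSpace (X i)] (μ : ∀ i, Measure (X i)) [∀ i, SigmaFinite (μ i)]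
    (A : ∀ b, Set (∀ i : γ b, X i)) (F : ∀ b, (∀ i : γ b, X i) → 𝕜) :
    ∫ x in {x | ∀ b, (γ b).restrict x ∈ A b}, ∏ b, F b ((γ b).restrict x) ∂Measure.pi μ =
      ∏ b, ∫ y in A b, F b y ∂Measure.pi fun i : γ b ↦ μ i := by
  let e : (Σ b, γ b) ≃ ι := Set.sigmaEquiv (fun b ↦ (γ b : Set ι)) hγ
  let split := (MeasurableEquiv.piCongrLeft X e).symm.trans
    (MeasurableEquiv.piCurry fun b (i : γ b) ↦ X i)
  have split_preserving : MeasurePreserving split (Measure.pi μ)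
      (Measure.pi fun b ↦ Measure.pi fun i : γ b ↦ μ i) :=
    (measurePreserving_piCurry fun b (i : γ b) ↦ μ i).comp
      ((measurePreserving_piCongrLeft μ e).symm _)
  have split_apply (x : ∀ i, X i) (b : β) : split x b = (γ b).restrict x := rfl
  have preimage_box : {x | ∀ b, (γ b).restrict x ∈ A b} = split ⁻¹' Set.univ.pi A := by
    ext x
    simp only [Set.mem_ofPred_eq, Set.mem_preimage, Set.mem_univ_pi, split_apply]
  rw [preimage_box]
  simp only [← split_apply]
  rw [split_preserving.setIntegral_preimage_emb split.measurableEmbedding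
      (fun y ↦ ∏ b, F b (y b)),
    Measure.restrict_pi_pi, integral_fintype_prod_eq_prod]

lemma sum_card_eq_card (hγ : ∀ i, ∃! b, i ∈ γ b) : ∑ b, (γ b).card = Fintype.card ι := by
  let e : (Σ b, γ b) ≃ ι := Set.sigmaEquiv (fun b ↦ (γ b : Set ι)) hγ
  simp only [← Fintype.card_congr e, Fintype.card_sigma, Fintype.card_coe]

end Partition

open Module in
lemma integral_comp_norm_sq {E F : Type*} [NormedAddCommGroup E] [InnerProductSpace ℝ E]
    [FiniteDimensional ℝ E] [MeasurableSpace E] [BorelSpace E] [Nontrivial E]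
    [NormedAddCommGroup F] [NormedSpace ℝ F] (f : ℝ → F) :
    ∫ x : E, f (‖x‖ ^ 2) =
      (π ^ (finrank ℝ E / 2 : ℝ) / Gamma (finrank ℝ E / 2)) •
        ∫ t in Set.Ioi (0 : ℝ), t ^ (finrank ℝ E / 2 - 1 : ℝ) • f t := by
  set d := finrank ℝ E with hd
  have d_pos : 0 < d := finrank_pos
  have ball_volume : (volume : Measure E).real (Metric.ball 0 1) =
      π ^ (d / 2 : ℝ) / (d / 2 * Gamma (d / 2)) := by
    have : 0 < Gamma (d / 2 : ℝ) := Gamma_pos_of_pos (by positivity)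
    rw [Measure.real, InnerProductSpace.volume_ball, ← hd, Gamma_add_one (by positivity),
      sqrt_eq_rpow, ← rpow_mul_natCast pi_pos.le, ENNReal.ofReal_one, one_pow, one_mul,
      ENNReal.toReal_ofReal (by positivity)]
    ring_nf
  have square_subst : ∫ t in Set.Ioi (0 : ℝ), t ^ (d / 2 - 1 : ℝ) • f t =
      (2 : ℝ) • ∫ r in Set.Ioi (0 : ℝ), r ^ (d - 1) • f (r ^ 2) := by
    rw [← integral_comp_rpow_Ioi_of_pos two_pos, ← integral_smul]
    refine setIntegral_congr_fun measurableSet_Ioi fun r (hr : 0 < r) ↦ ?_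
    have jacobian : r * (r ^ 2) ^ (d / 2 - 1 : ℝ) = r ^ (d - 1) := by
      rw [rpow_sub_one (by positivity), ← rpow_natCast_mul hr.le, Nat.cast_two,
        mul_div_cancel₀ _ two_ne_zero, rpow_natCast, pow_sub₀ r hr.ne' d_pos, pow_one]
      field_simp
    have two_sub_one : (2 - 1 : ℝ) = 1 := by norm_num
    simp only [rpow_two, smul_smul, ← jacobian, two_sub_one, rpow_one, mul_assoc]
  rw [integral_fun_norm_addHaar volume fun r ↦ f (r ^ 2), ball_volume, square_subst, smul_smul,
    ← Nat.cast_smul_eq_nsmul ℝ, smul_smul, ← hd]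
  congr 1
  field_simp

/-- The mean square of the coordinates of `x`: the maximum likelihood estimate `σ̂²` of the variance
of a centered Gaussian sample, with junk value `0` for an empty sample. -/
noncomputable def meanSq {ι : Type*} [Fintype ι] (x : ι → ℝ) : ℝ :=
  (∑ i, x i ^ 2) / Fintype.card ι

/-- The maximized likelihood of a single subband, encoded by evaluating the centered Gaussian
likelihood of the sample at the estimate `meanSq x`. On a nonempty sample with `meanSq x = 0`, where
the supremum over the variance is infinite, `gauss` makes this the junk value `0`. -/
noncomputable def gaussMaxLik {ι : Type*} [Fintype ι] (x : ι → ℝ) : ℝ :=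
  ∏ i, gauss (x i) (meanSq x)

section Block

variable {ι : Type*} [Fintype ι]

lemma measurable_meanSq : Measurable (meanSq : (ι → ℝ) → ℝ) := by
  unfold meanSq
  fun_prop

lemma card_mul_meanSq (x : ι → ℝ) : Fintype.card ι * meanSq x = ∑ i, x i ^ 2 := by
  refine mul_div_cancel_of_imp' fun h ↦ ?_
  have : IsEmpty ι := Fintype.card_eq_zero_iff.1 (Nat.cast_eq_zero.1 h)
  exact Fintype.sum_empty _

lemma gaussMaxLik_eq_rpow {x : ι → ℝ} (hx : 0 < meanSq x) :
    gaussMaxLik x = (2 * π * exp 1 * meanSq x) ^ (-(Fintype.card ι / 2) : ℝ) := by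
  have total_exponent : ∑ i, -(x i ^ 2) / (2 * meanSq x) = -(Fintype.card ι / 2 : ℝ) := by
    rw [← Finset.sum_div, Finset.sum_neg_distrib, ← card_mul_meanSq]
    field_simp
  simp only [gaussMaxLik, gauss]
  rw [Finset.prod_mul_distrib, Finset.prod_const, Finset.card_univ, ← exp_sum, total_exponent,
    ← rpow_mul_natCast (by positivity), mul_right_comm _ (exp 1),
    mul_rpow (by positivity) (exp_pos 1).le, exp_one_rpow]
  ring_nf

variable [Nonempty ι]

lemma integral_comp_meanSq {F : Type*} [NormedAddCommGroup F] [NormedSpace ℝ F] (f : ℝ → F) :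
    ∫ x : ι → ℝ, f (meanSq x) =
      ((π * Fintype.card ι) ^ (Fintype.card ι / 2 : ℝ) / Gamma (Fintype.card ι / 2)) •
        ∫ v in Set.Ioi (0 : ℝ), v ^ (Fintype.card ι / 2 - 1 : ℝ) • f v := by
  set k := (Fintype.card ι : ℝ) with hk
  have k_pos : 0 < k := by positivity
  have scale : ∫ t in Set.Ioi (0 : ℝ), t ^ (k / 2 - 1) • f (t / k) =
      k ^ (k / 2) • ∫ v in Set.Ioi (0 : ℝ), v ^ (k / 2 - 1) • f v := by
    have subst := integral_comp_mul_left_Ioi (fun t ↦ t ^ (k / 2 - 1) • f (t / k)) 0 k_pos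
    rw [mul_zero, eq_inv_smul_iff₀ k_pos.ne'] at subst
    rw [← subst, ← integral_smul, ← integral_smul]
    refine setIntegral_congr_fun measurableSet_Ioi fun v (hv : 0 < v) ↦ ?_
    simp only [mul_div_cancel_left₀ v k_pos.ne', mul_rpow k_pos.le hv.le, rpow_sub_one k_pos.ne',
      smul_smul]
    congr 1
    field_simp
  calc ∫ x : ι → ℝ, f (meanSq x)
      = ∫ x : EuclideanSpace ℝ ι, f (‖x‖ ^ 2 / k) := by
        rw [← (PiLp.volume_preserving_toLp ι).integral_comp
          (MeasurableEquiv.toLp 2 (ι → ℝ)).measurableEmbedding]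
        simp only [EuclideanSpace.norm_sq_eq, norm_eq_abs, sq_abs, meanSq, hk]
    _ = (π ^ (k / 2) / Gamma (k / 2)) • ∫ t in Set.Ioi (0 : ℝ), t ^ (k / 2 - 1) • f (t / k) := by
        rw [integral_comp_norm_sq fun t ↦ f (t / k), finrank_euclideanSpace]
    _ = _ := by
        rw [scale, smul_smul, mul_rpow pi_pos.le k_pos.le, div_mul_eq_mul_div]

lemma setIntegral_comp_meanSq {F : Type*} [NormedAddCommGroup F] [NormedSpace ℝ F] (f : ℝ → F)
    {s : Set ℝ} (hs : MeasurableSet s) (hs_pos : s ⊆ Set.Ioi 0) :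
    ∫ x : ι → ℝ in meanSq ⁻¹' s, f (meanSq x) =
      ((π * Fintype.card ι) ^ (Fintype.card ι / 2 : ℝ) / Gamma (Fintype.card ι / 2)) •
        ∫ v in s, v ^ (Fintype.card ι / 2 - 1 : ℝ) • f v := by
  rw [← integral_indicator (measurable_meanSq hs)]
  refine (integral_comp_meanSq (s.indicator f)).trans ?_
  simp only [← Set.indicator_smul_apply s (fun v : ℝ ↦ v ^ (Fintype.card ι / 2 - 1 : ℝ)) f]
  rw [setIntegral_indicator hs, Set.inter_eq_self_of_subset_right hs_pos]

lemma setIntegral_gaussMaxLik {v₀ v₁ : ℝ} (hv₀ : 0 < v₀) (hv : v₀ ≤ v₁) :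
    ∫ x : ι → ℝ in {x | meanSq x ∈ Set.Icc v₀ v₁}, gaussMaxLik x =
      (Fintype.card ι / (2 * exp 1)) ^ (Fintype.card ι / 2 : ℝ) / Gamma (Fintype.card ι / 2) *
        log (v₁ / v₀) := by
  set k := (Fintype.card ι : ℝ)
  have Icc_pos : Set.Icc v₀ v₁ ⊆ Set.Ioi 0 := fun v h ↦ hv₀.trans_le h.1
  have radial_integrand {v : ℝ} (hv_mem : v ∈ Set.Icc v₀ v₁) :
      v ^ (k / 2 - 1) * (2 * π * exp 1 * v) ^ (-(k / 2)) =
        (2 * π * exp 1) ^ (-(k / 2)) * v⁻¹ := by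
    have hv_pos : 0 < v := Icc_pos hv_mem
    rw [mul_rpow (by positivity) hv_pos.le, mul_left_comm, ← rpow_add hv_pos, ← rpow_neg_one]
    ring_nf
  calc ∫ x : ι → ℝ in meanSq ⁻¹' Set.Icc v₀ v₁, gaussMaxLik x
      = ∫ x : ι → ℝ in meanSq ⁻¹' Set.Icc v₀ v₁, (2 * π * exp 1 * meanSq x) ^ (-(k / 2)) :=
        setIntegral_congr_fun (measurable_meanSq measurableSet_Icc) fun x hx ↦
          gaussMaxLik_eq_rpow (Icc_pos hx)
    _ = (π * k) ^ (k / 2) / Gamma (k / 2) *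
          ∫ v in Set.Icc v₀ v₁, v ^ (k / 2 - 1) * (2 * π * exp 1 * v) ^ (-(k / 2)) :=
        setIntegral_comp_meanSq (fun v ↦ (2 * π * exp 1 * v) ^ (-(k / 2))) measurableSet_Icc Icc_pos
    _ = (π * k) ^ (k / 2) / Gamma (k / 2) * ((2 * π * exp 1) ^ (-(k / 2)) * log (v₁ / v₀)) := by
        rw [setIntegral_congr_fun measurableSet_Icc fun v ↦ radial_integrand,
          integral_Icc_eq_integral_Ioc, ← intervalIntegral.integral_of_le hv,
          intervalIntegral.integral_const_mul, integral_inv_of_pos hv₀ (hv₀.trans_le hv)]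
    _ = (k / (2 * exp 1)) ^ (k / 2) / Gamma (k / 2) * log (v₁ / v₀) := by
        have base_eq : k / (2 * exp 1) = π * k / (2 * π * exp 1) := by field_simp
        rw [base_eq, div_rpow (by positivity) (by positivity), rpow_neg (by positivity)]
        ring

omit [Nonempty ι] in
lemma gaussMaxLik_div_setIntegral {v₀ v₁ : ℝ} (hv₀ : 0 < v₀) (hv : v₀ ≤ v₁) {x : ι → ℝ}
    (hx : 0 < ∑ i, x i ^ 2) :
    gaussMaxLik x / ∫ y : ι → ℝ in {y | meanSq y ∈ Set.Icc v₀ v₁}, gaussMaxLik y =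
      Gamma (Fintype.card ι / 2) /
        ((π * ∑ i, x i ^ 2) ^ (Fintype.card ι / 2 : ℝ) * log (v₁ / v₀)) := by
  obtain ⟨i, -, -⟩ := Finset.exists_ne_zero_of_sum_ne_zero hx.ne'
  have : Nonempty ι := ⟨i⟩
  have meanSq_pos : 0 < meanSq x := div_pos hx (by positivity)
  have energy_rpow : (π * ∑ i, x i ^ 2) ^ (Fintype.card ι / 2 : ℝ) =
      (2 * π * exp 1 * meanSq x) ^ (Fintype.card ι / 2 : ℝ) *
        (Fintype.card ι / (2 * exp 1)) ^ (Fintype.card ι / 2 : ℝ) := by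
    rw [← mul_rpow (by positivity) (by positivity), ← card_mul_meanSq]
    field_simp
  rw [setIntegral_gaussMaxLik hv₀ hv, gaussMaxLik_eq_rpow meanSq_pos, energy_rpow,
    rpow_neg (by positivity)]
  simp only [div_eq_mul_inv, mul_inv, inv_inv]
  ring

end Block

section Subbands

variable {β ι : Type*} [Fintype β] [Fintype ι] {γ : β → Finset ι}

lemma prod_gaussMaxLik_restrict_div_setIntegral (hγ : ∀ i, ∃! b, i ∈ γ b) {v₀ v₁ : β → ℝ}
    (hv₀ : ∀ b, 0 < v₀ b) (hv : ∀ b, v₀ b ≤ v₁ b) {c : ι → ℝ}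
    (hc : ∀ b, 0 < ∑ i ∈ γ b, c i ^ 2) :
    (∏ b, gaussMaxLik ((γ b).restrict c)) /
        ∫ x in {x : ι → ℝ | ∀ b, meanSq ((γ b).restrict x) ∈ Set.Icc (v₀ b) (v₁ b)},
          ∏ b, gaussMaxLik ((γ b).restrict x) =
      ∏ b, Gamma ((γ b).card / 2) /
        ((π * ∑ i ∈ γ b, c i ^ 2) ^ ((γ b).card / 2 : ℝ) * log (v₁ b / v₀ b)) := by
  have energy_restrict (b : β) : ∑ i, (γ b).restrict c i ^ 2 = ∑ i ∈ γ b, c i ^ 2 :=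
    Finset.sum_coe_sort (γ b) fun i ↦ c i ^ 2
  have normalizer_factors :
      ∫ x in {x : ι → ℝ | ∀ b, meanSq ((γ b).restrict x) ∈ Set.Icc (v₀ b) (v₁ b)},
          ∏ b, gaussMaxLik ((γ b).restrict x) =
        ∏ b, ∫ y : γ b → ℝ in {y | meanSq y ∈ Set.Icc (v₀ b) (v₁ b)}, gaussMaxLik y :=
    setIntegral_prod_restrict hγ (X := fun _ ↦ ℝ) (fun _ ↦ volume)
      (fun b ↦ {y | meanSq y ∈ Set.Icc (v₀ b) (v₁ b)}) fun _ ↦ gaussMaxLik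
  rw [normalizer_factors, ← Finset.prod_div_distrib]
  refine Finset.prod_congr rfl fun b _ ↦ ?_
  rw [gaussMaxLik_div_setIntegral (hv₀ b) (hv b) (by rw [energy_restrict]; exact hc b),
    energy_restrict, Fintype.card_coe]

theorem stmt_12_general (hγ : ∀ i, ∃! b, i ∈ γ b) {v₀ v₁ : β → ℝ}
    (hv₀ : ∀ b, 0 < v₀ b) (hv : ∀ b, v₀ b < v₁ b) {c : ι → ℝ}
    (hc : ∀ b, 0 < ∑ i ∈ γ b, c i ^ 2) :
    -log ((∏ b, gaussMaxLik ((γ b).restrict c)) /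
        ∫ x in {x : ι → ℝ | ∀ b, meanSq ((γ b).restrict x) ∈ Set.Icc (v₀ b) (v₁ b)},
          ∏ b, gaussMaxLik ((γ b).restrict x)) =
      (∑ b, ((γ b).card / 2 * log (∑ i ∈ γ b, c i ^ 2) - log (Gamma ((γ b).card / 2)))) +
        Fintype.card ι / 2 * log π + ∑ b, log (log (v₁ b / v₀ b)) := by
  have Gamma_pos (b : β) : 0 < Gamma ((γ b).card / 2 : ℝ) := by
    obtain ⟨i, hi, -⟩ := Finset.exists_ne_zero_of_sum_ne_zero (hc b).ne'
    have : 0 < (γ b).card := Finset.card_pos.2 ⟨i, hi⟩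
    exact Gamma_pos_of_pos (by positivity)
  have energy_pow_pos (b : β) : 0 < (π * ∑ i ∈ γ b, c i ^ 2) ^ ((γ b).card / 2 : ℝ) :=
    rpow_pos_of_pos (mul_pos pi_pos (hc b)) _
  have log_ratio_pos (b : β) : 0 < log (v₁ b / v₀ b) := log_pos ((one_lt_div (hv₀ b)).2 (hv b))
  rw [prod_gaussMaxLik_restrict_div_setIntegral hγ hv₀ (fun b ↦ (hv b).le) hc,
    log_prod fun b _ ↦
      (div_pos (Gamma_pos b) (mul_pos (energy_pow_pos b) (log_ratio_pos b))).ne',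
    ← sum_card_eq_card hγ, Nat.cast_sum, Finset.sum_div, Finset.sum_mul,
    ← Finset.sum_add_distrib, ← Finset.sum_add_distrib, ← Finset.sum_neg_distrib]
  refine Finset.sum_congr rfl fun b _ ↦ ?_
  rw [log_div (Gamma_pos b).ne' (mul_pos (energy_pow_pos b) (log_ratio_pos b)).ne',
    log_mul (energy_pow_pos b).ne' (log_ratio_pos b).ne',
    log_rpow (mul_pos pi_pos (hc b)), log_mul pi_ne_zero (hc b).ne']
  ring

end Subbands

lemma existsUnique_mem_of_disjoint_of_biUnion_eq_univ {β ι : Type*} [Fintype β] [Fintype ι]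
    [DecidableEq ι] {γ : β → Finset ι} (hdisj : ∀ b b', b ≠ b' → Disjoint (γ b) (γ b'))
    (hcover : Finset.univ.biUnion γ = Finset.univ) (i : ι) : ∃! b, i ∈ γ b := by
  obtain ⟨b, -, hib⟩ := Finset.mem_biUnion.1 (hcover ▸ Finset.mem_univ i)
  refine ⟨b, hib, fun b' hib' ↦ ?_⟩
  by_contra hne
  exact Finset.disjoint_left.1 (hdisj b' b hne) hib' hib

lemma meanSq_restrict {n : ℕ} (γ : Finset (Fin n)) (c : Fin n → ℝ) :
    meanSq (γ.restrict c) = Sg γ c / γ.card := by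
  rw [meanSq, Fintype.card_coe, Sg, ← Finset.sum_coe_sort γ]
  rfl

lemma maxLikSub_eq_prod_gaussMaxLik {n B : ℕ} (γ : Fin (B + 1) → Finset (Fin n))
    (c : Fin n → ℝ) : maxLikSub γ c = ∏ b, gaussMaxLik ((γ b).restrict c) := by
  refine Finset.prod_congr rfl fun b _ ↦ ?_
  rw [gaussMaxLik, meanSq_restrict, ← Finset.prod_coe_sort (γ b)]
  rfl

theorem stmt_12 (n B : ℕ) (hn : 1 ≤ n) (γ : Fin (B + 1) → Finset (Fin n))
    (hdisj : ∀ b b' : Fin (B + 1), b ≠ b' → Disjoint (γ b) (γ b'))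
    (hcover : Finset.univ.biUnion γ = (Finset.univ : Finset (Fin n)))
    (k : Fin (B + 1) → ℕ) (hk : ∀ b, (γ b).card = k b) (hk1 : ∀ b, 1 ≤ k b)
    (σmin σmax : ℝ) (h0 : 0 < σmin) (hσ : σmin < σmax)
    (c : Fin n → ℝ)
    (hml : ∀ b : Fin (B + 1),
      Sg (γ b) c / (k b : ℝ) ∈ Set.Icc σmin σmax ∧ 0 < Sg (γ b) c / (k b : ℝ)) :
    -Real.log
      (maxLikSub γ c /
        ∫ c' in {c' : Fin n → ℝ | ∀ b : Fin (B + 1),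
            σmin ≤ Sg (γ b) c' / (k b : ℝ) ∧ Sg (γ b) c' / (k b : ℝ) ≤ σmax},
          maxLikSub γ c')
    = (∑ b : Fin (B + 1),
        ((k b : ℝ) / 2 * Real.log (Sg (γ b) c) - Real.log (Real.Gamma ((k b : ℝ) / 2))))
      + (n : ℝ) / 2 * Real.log Real.pi
      + ((B : ℝ) + 1) * Real.log (Real.log (σmax / σmin)) := by
  obtain rfl : k = fun b ↦ (γ b).card := funext fun b ↦ (hk b).symm
  have hγ := existsUnique_mem_of_disjoint_of_biUnion_eq_univ hdisj hcover
  have hc (b) : 0 < Sg (γ b) c := (div_pos_iff_of_pos_right (Nat.cast_pos.2 (hk1 b))).1 (hml b).2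
  simpa [maxLikSub_eq_prod_gaussMaxLik, meanSq_restrict, Set.mem_Icc, Sg] using
    stmt_12_general hγ (v₀ := fun _ ↦ σmin) (v₁ := fun _ ↦ σmax) (fun _ ↦ h0) (fun _ ↦ hσ) hc
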